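/- Let a = (a₁,…,aₙ) ∈ [1,∞)ⁿ and a_t ≥ 1. Let k₀, k ∈ 𝓢(ℝⁿ) satisfy: supp k₀, supp k ⊆ {x ∈ ℝⁿ : xₙ ≥ 0}, k has vanishing moments of all orders, and Σ_{j=0}^∞ k_j * u = u in 𝓢'(ℝⁿ) for every u ∈ 𝓢'(ℝⁿ). Let η ∈ 𝓢(ℝ) with η(0) = 1. Then: (i) for every ψ ∈ 𝓢(ℝⁿ×ℝ) the series Σ_{j=0}^∞ (x,t) ↦ (ǩ_j * ψ(·,t))(x)·η(2^{j a_t} t) converges in 𝓢(ℝⁿ×ℝ), and Tψ(x) := ∫_ℝ Σ_{j=0}^∞ (ǩ_j * ψ(·,t))(x)·η(2^{j a_t} t) dt defines a continuous linear map T : 𝓢(ℝⁿ×ℝ) → 𝓢(ℝⁿ); (ii) with Qu(·,t) ∈ 𝓢'(ℝⁿ) given by ⟨Qu(·,t), φ⟩ = Σ_{j=0}^∞ η(2^{j a_t} t)·⟨k_j * u, φ⟩ and Λ_{Qu} ∈ 𝓢'(ℝⁿ×ℝ) given by ⟨Λ_{Qu}, ψ⟩ = ∫_ℝ ⟨Qu(·,t),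 ψ(·,t)⟩ dt, one has ⟨Λ_{Qu}, ψ⟩ = ⟨u, Tψ⟩ for all u ∈ 𝓢'(ℝⁿ) and ψ ∈ 𝓢(ℝⁿ×ℝ); in particular u ↦ Λ_{Qu} is weak*-continuous from 𝓢'(ℝⁿ) to 𝓢'(ℝⁿ×ℝ). -/

import Mathlib

open MeasureTheory Filter Topology

noncomputable section

/-- Anisotropic dilation: `θ_0 = θ₀` and `θ_j(x) = 2^{j|a|} θ(2^{ja}x)` for `j ≥ 1`. -/
def anisoDil {m : ℕ} (a : Fin m → ℝ) (θ₀ θ : (Fin m → ℝ) → ℝ) (j : ℕ)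
    (x : Fin m → ℝ) : ℝ :=
  if j = 0 then θ₀ x
  else (2:ℝ) ^ ((j:ℝ) * ∑ i, a i) * θ (fun i => (2:ℝ) ^ ((j:ℝ) * a i) * x i)

/-- `θ` has vanishing moments of all orders. -/
def VanishingMoments {m : ℕ} (θ : (Fin m → ℝ) → ℝ) : Prop :=
  ∀ α : Fin m → ℕ, (∫ x : Fin m → ℝ, (∏ i, x i ^ α i) * θ x) = 0

open scoped ContDiff

section ParametricIntegral

variable {X D F : Type} [MeasurableSpace X] {μ : Measure X}
  [NormedAddCommGroup D] [NormedSpace ℝ D] [NormedAddCommGroup F] [NormedSpace ℝ F]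

/-- A family of smooth functions all of whose derivatives are dominated, uniformly in space,
by integrable functions of the parameter. -/
structure SmoothDominated (μ : Measure X) (f : X → D → F) : Prop where
  smooth : ∀ s, ContDiff ℝ ∞ (f s)
  meas : ∀ l x, AEStronglyMeasurable (fun s => iteratedFDeriv ℝ l (f s) x) μ
  bound : ∀ l, ∃ b : X → ℝ, Integrable b μ ∧ ∀ s x, ‖iteratedFDeriv ℝ l (f s) x‖ ≤ b s

namespace SmoothDominated

variable {f : X → D → F}

lemma integrable_iteratedFDeriv (hf : SmoothDominated μ f) (l : ℕ) (x : D) :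
    Integrable (fun s => iteratedFDeriv ℝ l (f s) x) μ := by
  obtain ⟨b, hb, hfb⟩ := hf.bound l
  exact hb.mono' (hf.meas l x) (.of_forall fun s => hfb s x)

lemma integrable (hf : SmoothDominated μ f) (x : D) : Integrable (fun s => f s x) μ := by
  have h := (continuousMultilinearCurryFin0 ℝ D F).toContinuousLinearEquiv.toContinuousLinearMap
    |>.integrable_comp (hf.integrable_iteratedFDeriv 0 x)
  simpa [iteratedFDeriv_zero_eq_comp] using h

lemma fderiv (hf : SmoothDominated μ f) :
    SmoothDominated μ (fun s => fderiv ℝ (f s)) where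
  smooth s := (hf.smooth s).fderiv_right (m := ∞) (by simp)
  meas l x := by
    have h := (continuousMultilinearCurryRightEquiv' ℝ l D F).continuous.comp_aestronglyMeasurable
      (hf.meas (l + 1) x)
    simpa [iteratedFDeriv_succ_eq_comp_right] using h
  bound l := by
    obtain ⟨b, hb, hfb⟩ := hf.bound (l + 1)
    exact ⟨b, hb, fun s x => by simpa only [norm_iteratedFDeriv_fderiv] using hfb s x⟩

lemma hasFDerivAt_integral (hf : SmoothDominated μ f) (x : D) :
    HasFDerivAt (fun x => ∫ s, f s x ∂μ) (∫ s, _root_.fderiv ℝ (f s) x ∂μ) x := by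
  obtain ⟨b, hb, hfb⟩ := hf.bound 1
  refine hasFDerivAt_integral_of_dominated_of_fderiv_le (s := Set.univ) (bound := b)
    (F := fun x s => f s x) (F' := fun x s => _root_.fderiv ℝ (f s) x)
    univ_mem (.of_forall fun y => (hf.integrable y).1) (hf.integrable x)
    (hf.fderiv.integrable x).1 (.of_forall fun s y _ => ?_) hb (.of_forall fun s y _ => ?_)
  · simpa [← norm_iteratedFDeriv_fderiv] using hfb s y
  · exact ((hf.smooth s).differentiable (by simp) y).hasFDerivAt

lemma fderiv_integral (hf : SmoothDominated μ f) :
    _root_.fderiv ℝ (fun x => ∫ s, f s x ∂μ) = fun x => ∫ s, _root_.fderiv ℝ (f s) x ∂μ :=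
  funext fun x => (hf.hasFDerivAt_integral x).fderiv

lemma contDiff_integral (hf : SmoothDominated μ f) : ContDiff ℝ ∞ (fun x => ∫ s, f s x ∂μ) := by
  refine contDiff_infty.2 fun N => ?_
  induction N generalizing F with
  | zero =>
    exact contDiff_zero.2 <| continuous_iff_continuousAt.2 fun x =>
      (hf.hasFDerivAt_integral x).continuousAt
  | succ N ih =>
    exact_mod_cast contDiff_succ_iff_hasFDerivAt.2 ⟨_, ih hf.fderiv, hf.hasFDerivAt_integral⟩

lemma iteratedFDeriv_integral (hf : SmoothDominated μ f) (l : ℕ) (x : D) :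
    iteratedFDeriv ℝ l (fun x => ∫ s, f s x ∂μ) x = ∫ s, iteratedFDeriv ℝ l (f s) x ∂μ := by
  induction l generalizing F with
  | zero =>
    simp only [iteratedFDeriv_zero_eq_comp, Function.comp_apply]
    exact ((continuousMultilinearCurryFin0 ℝ D F).symm.toContinuousLinearEquiv.integral_comp_comm
      (fun s => f s x)).symm
  | succ l ih =>
    simp only [iteratedFDeriv_succ_eq_comp_right, Function.comp_apply]
    have h := ih hf.fderiv
    simp only [hf.fderiv_integral]
    rw [h]
    exact (ContinuousLinearEquiv.integral_comp_comm (𝕜 := ℝ) (E := D [×l]→L[ℝ] D →L[ℝ] F)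
      (F := D [×(l + 1)]→L[ℝ] F)
      (continuousMultilinearCurryRightEquiv' ℝ l D F).symm.toContinuousLinearEquiv
      (μ := μ) (fun s => iteratedFDeriv ℝ l (_root_.fderiv ℝ (f s)) x)).symm

end SmoothDominated

end ParametricIntegral

section Taylor

variable {D F : Type} [NormedAddCommGroup D] [NormedSpace ℝ D]
  [NormedAddCommGroup F] [NormedSpace ℝ F]

lemma norm_iteratedFDeriv_iteratedFDeriv (f : D → F) (m l : ℕ) (x : D) :
    ‖iteratedFDeriv ℝ m (iteratedFDeriv ℝ l f) x‖ = ‖iteratedFDeriv ℝ (m + l) f x‖ := by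
  induction l generalizing F with
  | zero =>
    rw [iteratedFDeriv_zero_eq_comp]
    exact LinearIsometryEquiv.norm_iteratedFDeriv_comp_left _ _ _ _
  | succ l ih =>
    have h : iteratedFDeriv ℝ (l + 1) f = (continuousMultilinearCurryRightEquiv' ℝ l D F).symm ∘
        iteratedFDeriv ℝ l (fderiv ℝ f) := funext fun x => iteratedFDeriv_succ_eq_comp_right
    have h' := LinearIsometryEquiv.norm_iteratedFDeriv_comp_left (𝕜 := ℝ)
      (F := D [×l]→L[ℝ] D →L[ℝ] F) (G := D [×(l + 1)]→L[ℝ] F)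
      (continuousMultilinearCurryRightEquiv' ℝ l D F).symm (iteratedFDeriv ℝ l (fderiv ℝ f)) x m
    rw [h, ← add_assoc, ← norm_iteratedFDeriv_fderiv, ← ih]
    exact h'

lemma iteratedDeriv_comp_line {f : D → F} (hf : ContDiff ℝ ∞ f) (p v : D) (m : ℕ) (r : ℝ) :
    iteratedDeriv m (fun r : ℝ => f (p + r • v)) r
      = iteratedFDeriv ℝ m f (p + r • v) (fun _ => v) := by
  have h := (ContinuousLinearMap.toSpanSingleton ℝ v).iteratedFDeriv_comp_right
    (f := fun y => f (p + y)) (n := ∞) (by fun_prop) r (i := m) (mod_cast le_top)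
  have h' : (fun r : ℝ => f (p + r • v)) =
    (fun y => f (p + y)) ∘ (ContinuousLinearMap.toSpanSingleton ℝ v) := by ext; simp
  rw [iteratedDeriv_eq_iteratedFDeriv, h', h]
  simp [iteratedFDeriv_comp_add_left]

/-- Taylor's formula along a segment, with a bound on the remainder of order `M`. -/
lemma norm_sub_taylor_le {f : D → F} (hf : ContDiff ℝ ∞ f) (p v : D) (M : ℕ) {C : ℝ}
    (hC : ∀ r ∈ Set.Icc (0:ℝ) 1, ‖iteratedFDeriv ℝ M f (p + r • v)‖ ≤ C) :
    ‖f (p + v) - ∑ m ∈ Finset.range M,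
      ((m.factorial : ℝ)⁻¹) • iteratedFDeriv ℝ m f p (fun _ => v)‖ ≤ C * ‖v‖ ^ M := by
  cases M with
  | zero => simpa using hC 1 (by simp)
  | succ M =>
    have hg : ContDiff ℝ ∞ (fun r : ℝ => f (p + r • v)) := by fun_prop
    have hD : ∀ m, ∀ r ∈ Set.Icc (0:ℝ) 1,
        iteratedDerivWithin m (fun r : ℝ => f (p + r • v)) (Set.Icc 0 1) r
          = iteratedFDeriv ℝ m f (p + r • v) (fun _ => v) := fun m r hr => by
      rw [iteratedDerivWithin_eq_iteratedDeriv (uniqueDiffOn_Icc one_pos)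
        ((hg.of_le (mod_cast le_top)).contDiffAt) hr, iteratedDeriv_comp_line hf]
    have h := taylor_mean_remainder_bound (f := fun r : ℝ => f (p + r • v)) (a := 0) (b := 1)
      (x := 1) (n := M) (C := C * ‖v‖ ^ (M + 1)) zero_le_one
      ((hg.of_le (mod_cast le_top)).contDiffOn) (by simp) (fun r hr => by
        rw [hD _ r hr]
        refine (ContinuousMultilinearMap.le_opNorm _ _).trans ?_
        simp only [Finset.prod_const, Finset.card_univ, Fintype.card_fin]
        gcongr
        exact hC r hr)
    rw [taylor_within_apply] at h
    have hC0 : 0 ≤ C := (norm_nonneg _).trans (hC 0 (by simp))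
    simp only [one_smul, sub_zero, one_pow, mul_one] at h
    have hsum : ∀ m ∈ Finset.range (M + 1), (m.factorial : ℝ)⁻¹ •
        iteratedDerivWithin m (fun r : ℝ => f (p + r • v)) (Set.Icc 0 1) 0
          = (m.factorial : ℝ)⁻¹ • iteratedFDeriv ℝ m f p (fun _ => v) := fun m _ => by
      rw [hD m 0 (by simp)]; simp
    rw [Finset.sum_congr rfl hsum] at h
    refine h.trans (div_le_self (by positivity) ?_)
    exact_mod_cast Nat.one_le_iff_ne_zero.2 (Nat.factorial_ne_zero M)

end Taylor

section Average

variable {d : ℕ} {D G : Type} [NormedAddCommGroup D] [NormedSpace ℝ D]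
  [NormedAddCommGroup G] [NormedSpace ℝ G]

lemma SchwartzMap.integrable_norm_pow_mul_one_add (κ : SchwartzMap (Fin d → ℝ) ℝ) (M k : ℕ) :
    Integrable (fun z => ‖κ z‖ * (‖z‖ ^ M * (1 + ‖z‖) ^ k)) := by
  have h : (fun z => ‖κ z‖ * (‖z‖ ^ M * (1 + ‖z‖) ^ k)) = fun z =>
      ∑ i ∈ Finset.range (k + 1), (k.choose i : ℝ) * (‖z‖ ^ (M + i) * ‖κ z‖) := by
    ext z
    rw [add_comm 1, add_pow, Finset.mul_sum, Finset.mul_sum]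
    refine Finset.sum_congr rfl fun i _ => ?_
    rw [one_pow, pow_add]; ring
  rw [h]
  exact integrable_finsetSum _ fun i _ => (κ.integrable_pow_mul volume _).const_mul _

lemma SchwartzMap.integrable_monomial_mul (κ : SchwartzMap (Fin d → ℝ) ℝ) {m : ℕ}
    (r : Fin m → Fin d) : Integrable (fun z => (∏ i, z (r i)) * κ z) := by
  refine (κ.integrable_pow_mul volume m).mono' (by fun_prop) (.of_forall fun z => ?_)
  rw [norm_mul, norm_prod]
  gcongr
  refine (Finset.prod_le_prod (fun _ _ => norm_nonneg _)
    (fun i _ => norm_le_pi_norm z (r i))).trans ?_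
  simp

lemma ContinuousMultilinearMap.map_diagonal_eq_sum_monomials {m : ℕ} (B : D [×m]→L[ℝ] G)
    (L : (Fin d → ℝ) →L[ℝ] D) (z : Fin d → ℝ) :
    B (fun _ => L z) =
      ∑ r : Fin m → Fin d, (∏ i, z (r i)) • B (fun i => L (Pi.single (r i) 1)) := by
  have h : L z = ∑ i, z i • L (Pi.single i 1) := by
    conv_lhs => rw [pi_eq_sum_univ' z]
    simp
  rw [h, B.map_sum]
  exact Finset.sum_congr rfl fun r _ => B.map_smul_univ _ _

lemma integrable_smul_multilinear_diagonal (κ : SchwartzMap (Fin d → ℝ) ℝ) {m : ℕ}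
    (L : (Fin d → ℝ) →L[ℝ] D) (B : D [×m]→L[ℝ] G) :
    Integrable (fun z => κ z • B (fun _ => L z)) := by
  simp_rw [B.map_diagonal_eq_sum_monomials, Finset.smul_sum, smul_smul, mul_comm (κ _)]
  exact integrable_finsetSum _ fun r _ => (κ.integrable_monomial_mul r).smul_const _

lemma integral_smul_multilinear_diagonal_eq_zero [CompleteSpace G]
    (κ : SchwartzMap (Fin d → ℝ) ℝ) {m : ℕ}
    (hκ : ∀ r : Fin m → Fin d, ∫ z, (∏ i, z (r i)) * κ z = 0)
    (L : (Fin d → ℝ) →L[ℝ] D) (B : D [×m]→L[ℝ] G) :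
    ∫ z, κ z • B (fun _ => L z) = 0 := by
  simp_rw [B.map_diagonal_eq_sum_monomials, Finset.smul_sum, smul_smul, mul_comm (κ _)]
  rw [integral_finsetSum _ fun r _ => (κ.integrable_monomial_mul r).smul_const _]
  refine Finset.sum_eq_zero fun r _ => ?_
  rw [integral_smul_const, hκ, zero_smul]

/-- If the moments of `κ` of order `< M` vanish, averaging a smooth function against `κ` along
a small linear map `L` gains the factor `‖L‖ ^ M`. -/
lemma norm_integral_smul_comp_add_le [CompleteSpace G] (κ : SchwartzMap (Fin d → ℝ) ℝ) {M : ℕ}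
    (hκ : ∀ m < M, ∀ r : Fin m → Fin d, ∫ z, (∏ i, z (r i)) * κ z = 0)
    (L : (Fin d → ℝ) →L[ℝ] D) (hL : ‖L‖ ≤ 1) {f : D → G} (hf : ContDiff ℝ ∞ f) {k : ℕ} {Q : ℝ}
    (hQ : ∀ w, (1 + ‖w‖) ^ k * ‖iteratedFDeriv ℝ M f w‖ ≤ Q) (p : D)
    (hint : Integrable fun z => κ z • f (p + L z)) :
    ‖p‖ ^ k * ‖∫ z, κ z • f (p + L z)‖ ≤
      ‖L‖ ^ M * Q * ∫ z, ‖κ z‖ * (‖z‖ ^ M * (1 + ‖z‖) ^ k) := by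
  set P : (Fin d → ℝ) → G := fun z => ∑ m ∈ Finset.range M,
      ((m.factorial : ℝ)⁻¹) • iteratedFDeriv ℝ m f p (fun _ => L z) with hP
  have hPi : ∀ m : ℕ, Integrable (fun z => κ z •
      (((m.factorial : ℝ)⁻¹) • iteratedFDeriv ℝ m f p (fun _ => L z))) := fun m => by
    simp_rw [smul_comm (κ _)]
    exact (integrable_smul_multilinear_diagonal κ L _).smul _
  have hPint : Integrable (fun z => κ z • P z) := by
    simp_rw [hP, Finset.smul_sum]
    exact integrable_finsetSum _ fun m _ => hPi m
  have hP0 : ∫ z, κ z • P z = 0 := by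
    simp_rw [hP, Finset.smul_sum]
    rw [integral_finsetSum _ fun m _ => hPi m]
    refine Finset.sum_eq_zero fun m hm => ?_
    simp_rw [smul_comm (κ _)]
    rw [integral_smul, integral_smul_multilinear_diagonal_eq_zero κ
      (hκ m (Finset.mem_range.1 hm)), smul_zero]
  have heq : ∫ z, κ z • f (p + L z) = ∫ z, κ z • (f (p + L z) - P z) := by
    simp_rw [smul_sub]
    rw [integral_sub hint hPint, hP0, sub_zero]
  have hQ0 : 0 ≤ Q := le_trans (by positivity) (hQ 0)
  have hLz : ∀ z, ‖L z‖ ≤ ‖z‖ := fun z =>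
    (L.le_opNorm z).trans (mul_le_of_le_one_left (norm_nonneg _) hL)
  have hrem : ∀ z, ‖κ z • (f (p + L z) - P z)‖ ≤
      ((1 + ‖p‖) ^ k)⁻¹ * (‖L‖ ^ M * Q) * (‖κ z‖ * (‖z‖ ^ M * (1 + ‖z‖) ^ k)) := fun z => by
    have h := norm_sub_taylor_le hf p (L z) M (C := ((1 + ‖p‖) ^ k)⁻¹ * Q * (1 + ‖z‖) ^ k)
      (fun r hr => by
        have h1 : 1 + ‖p‖ ≤ (1 + ‖p + r • L z‖) * (1 + ‖z‖) := by
          have h2 : ‖p‖ ≤ ‖p + r • L z‖ + ‖r • L z‖ := by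
            simpa using norm_sub_le (p + r • L z) (r • L z)
          have h3 : ‖r • L z‖ ≤ ‖z‖ := by
            rw [norm_smul, Real.norm_of_nonneg hr.1]
            exact (mul_le_of_le_one_left (norm_nonneg _) hr.2).trans (hLz z)
          nlinarith [norm_nonneg z, norm_nonneg (p + r • L z),
            mul_nonneg (norm_nonneg z) (norm_nonneg (p + r • L z))]
        have h4 : (1 + ‖p‖) ^ k ≤ (1 + ‖p + r • L z‖) ^ k * (1 + ‖z‖) ^ k := by
          rw [← mul_pow]; gcongr
        rw [mul_assoc, ← div_eq_inv_mul, le_div_iff₀ (by positivity)]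
        calc ‖iteratedFDeriv ℝ M f (p + r • L z)‖ * (1 + ‖p‖) ^ k
            ≤ ‖iteratedFDeriv ℝ M f (p + r • L z)‖ *
              ((1 + ‖p + r • L z‖) ^ k * (1 + ‖z‖) ^ k) := by gcongr
          _ = ((1 + ‖p + r • L z‖) ^ k * ‖iteratedFDeriv ℝ M f (p + r • L z)‖) *
              (1 + ‖z‖) ^ k := by ring
          _ ≤ Q * (1 + ‖z‖) ^ k := by gcongr; exact hQ _)
    rw [norm_smul]
    calc ‖κ z‖ * ‖f (p + L z) - P z‖
        ≤ ‖κ z‖ * (((1 + ‖p‖) ^ k)⁻¹ * Q * (1 + ‖z‖) ^ k * (‖L‖ * ‖z‖) ^ M) := by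
          gcongr
          refine h.trans ?_
          gcongr
          exact L.le_opNorm z
      _ = _ := by rw [mul_pow]; ring
  have hI := norm_integral_le_of_norm_le
    ((κ.integrable_norm_pow_mul_one_add M k).const_mul _) (.of_forall hrem)
  rw [← heq, integral_const_mul] at hI
  have hI0 : 0 ≤ ∫ z, ‖κ z‖ * (‖z‖ ^ M * (1 + ‖z‖) ^ k) :=
    integral_nonneg fun z => by positivity
  calc ‖p‖ ^ k * ‖∫ z, κ z • f (p + L z)‖
      ≤ (1 + ‖p‖) ^ k * (((1 + ‖p‖) ^ k)⁻¹ * (‖L‖ ^ M * Q) *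
        ∫ z, ‖κ z‖ * (‖z‖ ^ M * (1 + ‖z‖) ^ k)) := by
        gcongr
        linarith
    _ = _ := by
        rw [← mul_assoc, ← mul_assoc, mul_inv_cancel₀ (by positivity), one_mul]

lemma smoothDominated_smul_comp_add (κ : SchwartzMap (Fin d → ℝ) ℝ)
    (L : (Fin d → ℝ) →L[ℝ] D) (ψ : SchwartzMap D ℝ) :
    SmoothDominated volume (fun (z : Fin d → ℝ) (p : D) => κ z • ψ (p + L z)) ∧
      ∀ l z p, iteratedFDeriv ℝ l (fun p : D => κ z • ψ (p + L z)) p =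
        κ z • iteratedFDeriv ℝ l ψ (p + L z) := by
  have hψ : ∀ z, ContDiff ℝ ∞ fun p => ψ (p + L z) := fun z =>
    (ψ.smooth ⊤).comp (contDiff_id.add contDiff_const)
  have hD : ∀ l z p, iteratedFDeriv ℝ l (fun p : D => κ z • ψ (p + L z)) p =
        κ z • iteratedFDeriv ℝ l ψ (p + L z) := fun l z p => by
    rw [iteratedFDeriv_const_smul_apply' ((hψ z).of_le (mod_cast le_top)).contDiffAt,
      iteratedFDeriv_comp_add_right]
  refine ⟨⟨fun z => (hψ z).const_smul (κ z), fun l p => ?_, fun l =>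
    ⟨fun z => ‖κ z‖ * SchwartzMap.seminorm ℝ 0 l ψ, κ.integrable.norm.mul_const _,
      fun z p => ?_⟩⟩, hD⟩
  · simp_rw [hD]
    have := (ψ.smooth ⊤).continuous_iteratedFDeriv (m := l) (mod_cast le_top)
    exact Continuous.aestronglyMeasurable (by fun_prop)
  · rw [hD, norm_smul]
    exact mul_le_mul_of_nonneg_left (ψ.norm_iteratedFDeriv_le_seminorm ℝ l _) (norm_nonneg _)

lemma exists_bound_iteratedFDeriv_average (κ : SchwartzMap (Fin d → ℝ) ℝ) (M k l : ℕ)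
    (hκ : ∀ m < M, ∀ r : Fin m → Fin d, ∫ z, (∏ i, z (r i)) * κ z = 0) :
    ∃ C : ℝ, 0 ≤ C ∧ ∀ (L : (Fin d → ℝ) →L[ℝ] D), ‖L‖ ≤ 1 → ∀ (ψ : SchwartzMap D ℝ) (p : D),
      ‖p‖ ^ k * ‖iteratedFDeriv ℝ l (fun p => ∫ z, κ z • ψ (p + L z)) p‖ ≤
        C * ‖L‖ ^ M * (Finset.Iic (k, M + l)).sup (schwartzSeminormFamily ℝ D ℝ) ψ := by
  refine ⟨2 ^ k * ∫ z, ‖κ z‖ * (‖z‖ ^ M * (1 + ‖z‖) ^ k),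
    mul_nonneg (by positivity) (integral_nonneg fun z => by positivity), fun L hL ψ p => ?_⟩
  obtain ⟨hdom, hD⟩ := smoothDominated_smul_comp_add κ L ψ
  rw [hdom.iteratedFDeriv_integral]
  have hint := hdom.integrable_iteratedFDeriv l p
  simp_rw [hD] at hint ⊢
  have h := norm_integral_smul_comp_add_le κ hκ L hL
    ((ψ.smooth ⊤).iteratedFDeriv_right (i := l) (m := ∞) (by exact_mod_cast le_top)) (k := k)
    (Q := 2 ^ k * (Finset.Iic (k, M + l)).sup (schwartzSeminormFamily ℝ D ℝ) ψ)
    (fun w => by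
      rw [norm_iteratedFDeriv_iteratedFDeriv]
      exact SchwartzMap.one_add_le_sup_seminorm_apply (𝕜 := ℝ) (m := (k, M + l)) le_rfl le_rfl ψ w)
    p hint
  refine h.trans (le_of_eq ?_)
  ring

end Average

section CutoffAverage

variable {d : ℕ} {E : Type} [NormedAddCommGroup E] [NormedSpace ℝ E]

lemma norm_iteratedFDeriv_comp_mul_snd_le (η : SchwartzMap ℝ ℝ) {c : ℝ} (hc : 0 ≤ c) (l : ℕ)
    (p : E × ℝ) :
    ‖iteratedFDeriv ℝ l (fun p : E × ℝ => η (c * p.2)) p‖ ≤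
      SchwartzMap.seminorm ℝ 0 l η * c ^ l := by
  have h := (c • ContinuousLinearMap.snd ℝ E ℝ).iteratedFDeriv_comp_right (η.smooth ⊤) p
    (i := l) (mod_cast le_top)
  have h' : (fun p : E × ℝ => η (c * p.2)) = η ∘ (c • ContinuousLinearMap.snd ℝ E ℝ) := by
    ext; simp
  have hn : ‖c • ContinuousLinearMap.snd ℝ E ℝ‖ ≤ c := by
    rw [norm_smul, Real.norm_of_nonneg hc]
    exact mul_le_of_le_one_right hc (ContinuousLinearMap.norm_snd_le ..)
  rw [h', h]
  refine (ContinuousMultilinearMap.norm_compContinuousLinearMap_le _ _).trans ?_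
  simp only [Finset.prod_const, Finset.card_univ, Fintype.card_fin]
  gcongr
  exact η.norm_iteratedFDeriv_le_seminorm ℝ l _

lemma exists_bound_iteratedFDeriv_average_mul (κ : SchwartzMap (Fin d → ℝ) ℝ)
    (η : SchwartzMap ℝ ℝ) (M k l : ℕ)
    (hκ : ∀ m < M, ∀ r : Fin m → Fin d, ∫ z, (∏ i, z (r i)) * κ z = 0) :
    ∃ C : ℝ, 0 ≤ C ∧ ∀ (L : (Fin d → ℝ) →L[ℝ] E × ℝ), ‖L‖ ≤ 1 → ∀ c : ℝ, 1 ≤ c →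
      ∀ (ψ : SchwartzMap (E × ℝ) ℝ) (p : E × ℝ),
      ‖p‖ ^ k * ‖iteratedFDeriv ℝ l
          (fun p : E × ℝ => (∫ z, κ z • ψ (p + L z)) * η (c * p.2)) p‖ ≤
        C * (‖L‖ ^ M * c ^ l) *
          (Finset.Iic (k, M + l)).sup (schwartzSeminormFamily ℝ (E × ℝ) ℝ) ψ := by
  choose C hC0 hC using fun i =>
    exists_bound_iteratedFDeriv_average (D := E × ℝ) κ M k i hκ
  refine ⟨∑ i ∈ Finset.range (l + 1), l.choose i * C i * SchwartzMap.seminorm ℝ 0 (l - i) η,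
    Finset.sum_nonneg fun i _ => by have := hC0 i; positivity, fun L hL c hc ψ p => ?_⟩
  have hη : ContDiff ℝ ∞ fun p : E × ℝ => η (c * p.2) :=
    (η.smooth ⊤).comp (contDiff_const.mul contDiff_snd)
  have hA := (smoothDominated_smul_comp_add κ L ψ).1.contDiff_integral
  have h := norm_iteratedFDeriv_mul_le hA hη p (n := l) (mod_cast le_top)
  refine (mul_le_mul_of_nonneg_left h (by positivity)).trans ?_
  rw [Finset.mul_sum, Finset.sum_mul, Finset.sum_mul]
  refine Finset.sum_le_sum fun i hi => ?_
  have hil : i ≤ l := Nat.lt_succ_iff.1 (Finset.mem_range.1 hi)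
  have h1 := hC i L hL ψ p
  have h2 := norm_iteratedFDeriv_comp_mul_snd_le (E := E) η (zero_le_one.trans hc) (l - i) p
  have h3 : c ^ (l - i) ≤ c ^ l := pow_le_pow_right₀ hc (Nat.sub_le _ _)
  have h4 : (Finset.Iic (k, M + i)).sup (schwartzSeminormFamily ℝ (E × ℝ) ℝ) ψ ≤
      (Finset.Iic (k, M + l)).sup (schwartzSeminormFamily ℝ (E × ℝ) ℝ) ψ :=
    Finset.sup_mono (f := schwartzSeminormFamily ℝ (E × ℝ) ℝ)
      (Finset.Iic_subset_Iic.2 (Prod.mk_le_mk.2 ⟨le_rfl, by omega⟩)) ψ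
  have hC0 := hC0 i
  have h1' : ‖p‖ ^ k * ‖iteratedFDeriv ℝ i (fun p : E × ℝ => ∫ z, κ z • ψ (p + L z)) p‖ ≤
      C i * ‖L‖ ^ M * (Finset.Iic (k, M + l)).sup (schwartzSeminormFamily ℝ (E × ℝ) ℝ) ψ :=
    h1.trans (mul_le_mul_of_nonneg_left h4 (by positivity))
  have h2' : ‖iteratedFDeriv ℝ (l - i) (fun p : E × ℝ => η (c * p.2)) p‖ ≤
      SchwartzMap.seminorm ℝ 0 (l - i) η * c ^ l :=
    h2.trans (mul_le_mul_of_nonneg_left h3 (apply_nonneg _ _))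
  calc ‖p‖ ^ k * (l.choose i *
        ‖iteratedFDeriv ℝ i (fun p : E × ℝ => ∫ z, κ z • ψ (p + L z)) p‖ *
        ‖iteratedFDeriv ℝ (l - i) (fun p : E × ℝ => η (c * p.2)) p‖)
      = l.choose i * (‖p‖ ^ k *
        ‖iteratedFDeriv ℝ i (fun p : E × ℝ => ∫ z, κ z • ψ (p + L z)) p‖) *
        ‖iteratedFDeriv ℝ (l - i) (fun p : E × ℝ => η (c * p.2)) p‖ := by ring
    _ ≤ l.choose i * (C i * ‖L‖ ^ M *
          (Finset.Iic (k, M + l)).sup (schwartzSeminormFamily ℝ (E × ℝ) ℝ) ψ) *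
        (SchwartzMap.seminorm ℝ 0 (l - i) η * c ^ l) := by
        exact mul_le_mul (mul_le_mul_of_nonneg_left h1' (by positivity)) h2' (norm_nonneg _)
          (mul_nonneg (by positivity) (mul_nonneg (by positivity) (apply_nonneg _ _)))
    _ = _ := by ring

/-- The operator `ψ ↦ (∫ κ(z) ψ(· + L z) dz) · η(c t)` on Schwartz functions of `(x, t)`. -/
def cutoffAverage (κ : SchwartzMap (Fin d → ℝ) ℝ) (η : SchwartzMap ℝ ℝ)
    (L : (Fin d → ℝ) →L[ℝ] E × ℝ) (hL : ‖L‖ ≤ 1) (c : ℝ) (hc : 1 ≤ c) :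
    SchwartzMap (E × ℝ) ℝ →L[ℝ] SchwartzMap (E × ℝ) ℝ :=
  SchwartzMap.mkCLM (fun ψ p => (∫ z, κ z • ψ (p + L z)) * η (c * p.2))
    (fun ψ φ p => by
      have hψ := (smoothDominated_smul_comp_add κ L ψ).1.integrable p
      have hφ := (smoothDominated_smul_comp_add κ L φ).1.integrable p
      simp only [add_apply, smul_add]
      rw [integral_add hψ hφ, add_mul])
    (fun b ψ p => by
      simp only [smul_apply, smul_comm (κ _) b, RingHom.id_apply]
      rw [integral_smul, smul_mul_assoc])
    (fun ψ => (smoothDominated_smul_comp_add κ L ψ).1.contDiff_integral.mul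
      ((η.smooth ⊤).comp (contDiff_const.mul contDiff_snd)))
    (fun n => by
      obtain ⟨C, hC0, hC⟩ := exists_bound_iteratedFDeriv_average_mul (E := E) κ η 0 n.1 n.2
        (by simp)
      exact ⟨_, C * (‖L‖ ^ 0 * c ^ n.2), by positivity, hC L hL c hc⟩)

end CutoffAverage

section Series

variable {D : Type} [NormedAddCommGroup D] [NormedSpace ℝ D]

lemma SchwartzMap.pow_mul_norm_tsum_iteratedFDeriv_le {ι : Type} {f : ι → SchwartzMap D ℝ}
    {k l : ℕ} {b : ι → ℝ} (hb : Summable b) (hf : ∀ j, SchwartzMap.seminorm ℝ k l (f j) ≤ b j)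
    (x : D) (hs : Summable fun j => iteratedFDeriv ℝ l (f j) x) :
    ‖x‖ ^ k * ‖∑' j, iteratedFDeriv ℝ l (f j) x‖ ≤ ∑' j, b j := by
  have hle : ∀ j, ‖‖x‖ ^ k • iteratedFDeriv ℝ l (f j) x‖ ≤ b j := fun j => by
    rw [norm_smul, norm_pow, norm_norm]
    exact ((f j).le_seminorm ℝ k l x).trans (hf j)
  calc ‖x‖ ^ k * ‖∑' j, iteratedFDeriv ℝ l (f j) x‖
      = ‖∑' j, ‖x‖ ^ k • iteratedFDeriv ℝ l (f j) x‖ := by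
        rw [hs.tsum_const_smul, norm_smul, norm_pow, norm_norm]
    _ ≤ ∑' j, b j := tsum_of_norm_bounded hb.hasSum hle

/-- A series of Schwartz functions with summable unweighted seminorms is smooth and can be
differentiated termwise. -/
lemma SchwartzMap.iteratedFDeriv_tsum_eq {f : ℕ → SchwartzMap D ℝ} {b : ℕ → ℕ → ℝ}
    (hb : ∀ l, Summable (b l)) (hf : ∀ l j, SchwartzMap.seminorm ℝ 0 l (f j) ≤ b l j) :
    ContDiff ℝ ∞ (fun x => ∑' j, f j x) ∧ (∀ x, Summable fun j => f j x) ∧ ∀ l x,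
      Summable (fun j => iteratedFDeriv ℝ l (f j) x) ∧
      iteratedFDeriv ℝ l (fun x => ∑' j, f j x) x = ∑' j, iteratedFDeriv ℝ l (f j) x := by
  have hle : ∀ l j x, ‖iteratedFDeriv ℝ l (f j) x‖ ≤ b l j := fun l j x =>
    ((f j).norm_iteratedFDeriv_le_seminorm ℝ l x).trans (hf l j)
  refine ⟨contDiff_tsum (N := ⊤) (fun j => (f j).smooth ⊤) (fun l _ => hb l)
    (fun l j x _ => hle l j x), fun x => .of_norm_bounded (hb 0) fun j => ?_,
    fun l x => ⟨.of_norm_bounded (hb l) fun j => hle l j x, ?_⟩⟩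
  · simpa using hle 0 j x
  · exact iteratedFDeriv_tsum_apply (N := ⊤) (fun j => (f j).smooth ⊤) (fun l _ => hb l)
      (fun l j x _ => hle l j x) le_top x

lemma SchwartzMap.hasSum_of_summable_seminorm {f : ℕ → SchwartzMap D ℝ} {b : ℕ → ℕ → ℕ → ℝ}
    (hb : ∀ k l, Summable (b k l)) (hf : ∀ k l j, SchwartzMap.seminorm ℝ k l (f j) ≤ b k l j)
    {g : SchwartzMap D ℝ} (hg : ⇑g = fun x => ∑' j, f j x) : HasSum f g := by
  obtain ⟨-, -, hD⟩ := SchwartzMap.iteratedFDeriv_tsum_eq (hb 0) (hf 0)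
  have hb0 : ∀ k l j, 0 ≤ b k l j := fun k l j => (apply_nonneg _ _).trans (hf k l j)
  rw [HasSum, SummationFilter.unconditional_filter, (schwartz_withSeminorms ℝ D ℝ).tendsto_nhds]
  rintro ⟨k, l⟩ ε hε
  filter_upwards [(tendsto_tsum_compl_atTop_zero (b k l)).eventually_lt_const hε] with t ht
  refine lt_of_le_of_lt ?_ ht
  rw [map_sub_rev]
  refine SchwartzMap.seminorm_le_bound ℝ k l _ (tsum_nonneg fun _ => hb0 _ _ _) fun x => ?_
  have hsub : iteratedFDeriv ℝ l (g - ∑ j ∈ t, f j : SchwartzMap D ℝ) x =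
      ∑' j : {j // j ∉ t}, iteratedFDeriv ℝ l (f j) x := by
    have h1 : iteratedFDeriv ℝ l (g - ∑ j ∈ t, f j : SchwartzMap D ℝ) x =
        iteratedFDeriv ℝ l g x - ∑ j ∈ t, iteratedFDeriv ℝ l (f j) x := by
      have h2 : (⇑(g - ∑ j ∈ t, f j : SchwartzMap D ℝ)) = ⇑g - fun x => ∑ j ∈ t, f j x := by
        ext x; simp
      have h3 : ContDiff ℝ l fun x => ∑ j ∈ t, f j x := ContDiff.sum fun j _ => (f j).smooth l
      rw [h2, iteratedFDeriv_sub_apply (g.smooth l).contDiffAt h3.contDiffAt,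
        iteratedFDeriv_fun_sum_apply fun j _ => ((f j).smooth l).contDiffAt]
    rw [h1, hg, (hD l x).2, ← (hD l x).1.sum_add_tsum_subtype_compl t, add_sub_cancel_left]
  rw [hsub]
  exact SchwartzMap.pow_mul_norm_tsum_iteratedFDeriv_le
    ((hb k l).comp_injective Subtype.val_injective) (fun j => hf k l j) x
    ((hD l x).1.comp_injective Subtype.val_injective)

lemma exists_hasSum_schwartz (R : ℕ → SchwartzMap D ℝ →L[ℝ] SchwartzMap D ℝ)
    (hR : ∀ k l : ℕ, ∃ (s : Finset (ℕ × ℕ)) (b : ℕ → ℝ), Summable b ∧ (∀ j, 0 ≤ b j) ∧ ∀ j ψ,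
      SchwartzMap.seminorm ℝ k l (R j ψ) ≤ b j * s.sup (schwartzSeminormFamily ℝ D ℝ) ψ) :
    ∃ S : SchwartzMap D ℝ →L[ℝ] SchwartzMap D ℝ, ∀ ψ, HasSum (fun j => R j ψ) (S ψ) := by
  choose s b hb hb0 hbR using hR
  have hsum := fun ψ => SchwartzMap.iteratedFDeriv_tsum_eq
    (fun l => (hb 0 l).mul_right _) (fun l j => hbR 0 l j ψ)
  let S : SchwartzMap D ℝ →L[ℝ] SchwartzMap D ℝ :=
    SchwartzMap.mkCLM (fun ψ x => ∑' j, R j ψ x)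
      (fun ψ φ x => by simpa using ((hsum ψ).2.1 x).tsum_add ((hsum φ).2.1 x))
      (fun c ψ x => by simpa using tsum_mul_left)
      (fun ψ => (hsum ψ).1)
      (fun n => ⟨s n.1 n.2, ∑' j, b n.1 n.2 j, tsum_nonneg (hb0 n.1 n.2), fun ψ x => by
        rw [((hsum ψ).2.2 n.2 x).2, ← tsum_mul_right]
        exact SchwartzMap.pow_mul_norm_tsum_iteratedFDeriv_le ((hb n.1 n.2).mul_right _)
          (fun j => hbR n.1 n.2 j ψ) x ((hsum ψ).2.2 n.2 x).1⟩)
  exact ⟨S, fun ψ => SchwartzMap.hasSum_of_summable_seminorm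
    (fun k l => (hb k l).mul_right _) (fun k l j => hbR k l j ψ) rfl⟩

end Series

section Slices

variable {E F : Type} [NormedAddCommGroup E] [NormedSpace ℝ E]
  [NormedAddCommGroup F] [NormedSpace ℝ F]

lemma iteratedFDeriv_slice (S : SchwartzMap (E × ℝ) F) (l : ℕ) (t : ℝ) (x : E) :
    iteratedFDeriv ℝ l (fun x => S (x, t)) x =
      (iteratedFDeriv ℝ l S (x, t)).compContinuousLinearMap
        fun _ => ContinuousLinearMap.inl ℝ E ℝ := by
  have hS : ContDiff ℝ ∞ S := S.smooth ⊤
  have h := (ContinuousLinearMap.inl ℝ E ℝ).iteratedFDeriv_comp_right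
    (f := fun y => S (y + (0, t))) (n := ∞) (hS.comp (contDiff_id.add contDiff_const)) x (i := l)
    (mod_cast le_top)
  have h' : (fun x => S (x, t)) =
      (fun y => S (y + (0, t))) ∘ ContinuousLinearMap.inl ℝ E ℝ := by ext; simp
  rw [h', h, iteratedFDeriv_comp_add_right]
  simp

lemma norm_compContinuousLinearMap_inl_le {l : ℕ} (B : (E × ℝ) [×l]→L[ℝ] F) :
    ‖B.compContinuousLinearMap fun _ => ContinuousLinearMap.inl ℝ E ℝ‖ ≤ ‖B‖ := by
  refine (ContinuousMultilinearMap.norm_compContinuousLinearMap_le _ _).trans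
    (mul_le_of_le_one_right (norm_nonneg _) ?_)
  exact Finset.prod_le_one (fun _ _ => norm_nonneg _)
    fun _ _ => ContinuousLinearMap.norm_inl_le_one ℝ E ℝ

lemma pow_mul_norm_iteratedFDeriv_slice_le (S : SchwartzMap (E × ℝ) F) (k l : ℕ) (t : ℝ) (x : E) :
    ‖x‖ ^ k * ‖iteratedFDeriv ℝ l (fun x => S (x, t)) x‖ ≤ (1 + t ^ 2)⁻¹ *
      (SchwartzMap.seminorm ℝ k l S + SchwartzMap.seminorm ℝ (k + 2) l S) := by
  rw [iteratedFDeriv_slice, le_inv_mul_iff₀ (by positivity)]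
  have hx : ‖x‖ ≤ ‖(x, t)‖ := norm_fst_le (x, t)
  have ht : t ^ 2 ≤ ‖(x, t)‖ ^ 2 := by
    rw [← sq_abs]
    exact pow_le_pow_left₀ (abs_nonneg t) (norm_snd_le (x, t)) 2
  calc (1 + t ^ 2) * (‖x‖ ^ k * ‖(iteratedFDeriv ℝ l S (x, t)).compContinuousLinearMap
        fun _ => ContinuousLinearMap.inl ℝ E ℝ‖)
      ≤ (1 + ‖(x, t)‖ ^ 2) * (‖(x, t)‖ ^ k * ‖iteratedFDeriv ℝ l S (x, t)‖) := by
        have := norm_compContinuousLinearMap_inl_le (iteratedFDeriv ℝ l S (x, t))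
        gcongr
    _ = ‖(x, t)‖ ^ k * ‖iteratedFDeriv ℝ l S (x, t)‖ +
        ‖(x, t)‖ ^ (k + 2) * ‖iteratedFDeriv ℝ l S (x, t)‖ := by ring
    _ ≤ _ := add_le_add (S.le_seminorm ℝ k l _) (S.le_seminorm ℝ (k + 2) l _)

/-- Restriction of a Schwartz function of `(x, t)` to a fixed `t`. -/
def SchwartzMap.slice (t : ℝ) : SchwartzMap (E × ℝ) F →L[ℝ] SchwartzMap E F :=
  SchwartzMap.mkCLM (fun S x => S (x, t)) (fun _ _ _ => rfl) (fun _ _ _ => rfl)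
    (fun S => (S.smooth ⊤).comp (contDiff_id.prodMk contDiff_const))
    (fun n => ⟨{n}, 1, zero_le_one, fun S x => by
      have h := norm_compContinuousLinearMap_inl_le (iteratedFDeriv ℝ n.2 S (x, t))
      rw [iteratedFDeriv_slice, one_mul, Finset.sup_singleton]
      refine le_trans ?_ (S.le_seminorm ℝ n.1 n.2 (x, t))
      have hx : ‖x‖ ≤ ‖(x, t)‖ := norm_fst_le (x, t)
      gcongr⟩)

@[simp]
lemma SchwartzMap.slice_apply (t : ℝ) (S : SchwartzMap (E × ℝ) F) (x : E) :
    SchwartzMap.slice t S x = S (x, t) := rfl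

lemma SchwartzMap.seminorm_slice_le (S : SchwartzMap (E × ℝ) F) (k l : ℕ) (t : ℝ) :
    SchwartzMap.seminorm ℝ k l (slice t S) ≤ (1 + t ^ 2)⁻¹ *
      (SchwartzMap.seminorm ℝ k l S + SchwartzMap.seminorm ℝ (k + 2) l S) :=
  SchwartzMap.seminorm_le_bound ℝ k l _
    (mul_nonneg (by positivity) (add_nonneg (apply_nonneg _ _) (apply_nonneg _ _)))
    fun x => pow_mul_norm_iteratedFDeriv_slice_le S k l t x

lemma SchwartzMap.seminorm_slice_sub_slice_le (S : SchwartzMap (E × ℝ) F) (k l : ℕ) (t t' : ℝ) :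
    SchwartzMap.seminorm ℝ k l (slice t S - slice t' S) ≤
      SchwartzMap.seminorm ℝ k (l + 1) S * |t - t'| := by
  refine SchwartzMap.seminorm_le_bound ℝ k l _
    (mul_nonneg (apply_nonneg _ _) (abs_nonneg _)) fun x => ?_
  have hS : ContDiff ℝ ∞ S := S.smooth ⊤
  have hsub : iteratedFDeriv ℝ l (slice t S - slice t' S : SchwartzMap E F) x =
      (iteratedFDeriv ℝ l S (x, t) - iteratedFDeriv ℝ l S (x, t')).compContinuousLinearMap
        fun _ => ContinuousLinearMap.inl ℝ E ℝ := by
    have h := iteratedFDeriv_sub_apply (i := l) (x := x) ((slice t S).smooth l).contDiffAt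
      ((slice t' S).smooth l).contDiffAt
    have h1 : ∀ t, iteratedFDeriv ℝ l (slice t S) x = _ := fun t => iteratedFDeriv_slice S l t x
    rw [h1, h1] at h
    exact h
  rw [hsub]
  have hd : Differentiable ℝ (iteratedFDeriv ℝ l S) :=
    hS.differentiable_iteratedFDeriv (mod_cast WithTop.coe_lt_top _)
  have hmv := (convex_univ (𝕜 := ℝ) (E := ℝ)).norm_image_sub_le_of_norm_hasDerivWithin_le
    (f := fun t => ‖x‖ ^ k • iteratedFDeriv ℝ l S (x, t))
    (f' := fun t => ‖x‖ ^ k • fderiv ℝ (iteratedFDeriv ℝ l S) (x, t) (0, 1))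
    (C := SchwartzMap.seminorm ℝ k (l + 1) S) (x := t') (y := t)
    (fun s _ => HasDerivAt.hasDerivWithinAt <| HasDerivAt.fun_const_smul _ <|
      (hd (x, s)).hasFDerivAt.comp_hasDerivAt s ((hasDerivAt_const s x).prodMk (hasDerivAt_id s)))
    (fun s _ => by
      rw [norm_smul, norm_pow, norm_norm]
      refine le_trans ?_ (S.le_seminorm ℝ k (l + 1) (x, s))
      rw [← norm_fderiv_iteratedFDeriv]
      have hx : ‖x‖ ≤ ‖(x, s)‖ := norm_fst_le (x, s)
      have h1 : ‖((0 : E), (1 : ℝ))‖ ≤ 1 := by simp [Prod.norm_def]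
      gcongr
      exact ContinuousLinearMap.unit_le_opNorm _ _ h1)
    (Set.mem_univ _) (Set.mem_univ _)
  rw [← smul_sub, norm_smul, norm_pow, norm_norm] at hmv
  refine le_trans ?_ hmv
  gcongr
  exact norm_compContinuousLinearMap_inl_le _

lemma smoothDominated_slice (S : SchwartzMap (E × ℝ) F) :
    SmoothDominated volume (fun (t : ℝ) (x : E) => S (x, t)) where
  smooth t := (SchwartzMap.slice t S).smooth ⊤
  meas l x := by
    have hS : ContDiff ℝ ∞ S := S.smooth ⊤
    simp_rw [iteratedFDeriv_slice]
    refine Continuous.aestronglyMeasurable ?_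
    refine (ContinuousMultilinearMap.compContinuousLinearMapL
      (fun _ : Fin l => ContinuousLinearMap.inl ℝ E ℝ)).continuous.comp ?_
    exact (hS.continuous_iteratedFDeriv (mod_cast le_top)).comp (by fun_prop)
  bound l := ⟨_, integrable_inv_one_add_sq.mul_const _, fun t x => by
    simpa using pow_mul_norm_iteratedFDeriv_slice_le S 0 l t x⟩

/-- Integration of a Schwartz function of `(x, t)` in `t`. -/
def SchwartzMap.integralSnd : SchwartzMap (E × ℝ) F →L[ℝ] SchwartzMap E F :=
  SchwartzMap.mkCLM (fun S x => ∫ t : ℝ, S (x, t))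
    (fun S S' x => integral_add ((smoothDominated_slice S).integrable x)
      ((smoothDominated_slice S').integrable x))
    (fun c S x => integral_smul c _)
    (fun S => (smoothDominated_slice S).contDiff_integral)
    (fun n => ⟨{n, (n.1 + 2, n.2)}, (∫ t : ℝ, (1 + t ^ 2)⁻¹) * 2,
      mul_nonneg (integral_nonneg fun t => by positivity) zero_le_two, fun S x => by
      set q := ({n, (n.1 + 2, n.2)} : Finset (ℕ × ℕ)).sup (schwartzSeminormFamily ℝ (E × ℝ) F)
      have hq : ∀ i ∈ ({n, (n.1 + 2, n.2)} : Finset (ℕ × ℕ)),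
          SchwartzMap.seminorm ℝ i.1 i.2 S ≤ q S := fun i hi =>
        Finset.le_sup (f := schwartzSeminormFamily ℝ (E × ℝ) F) hi S
      have h1 := hq n (by simp)
      have h2 := hq (n.1 + 2, n.2) (by simp)
      rw [(smoothDominated_slice S).iteratedFDeriv_integral]
      calc ‖x‖ ^ n.1 * ‖∫ t : ℝ, iteratedFDeriv ℝ n.2 (fun x => S (x, t)) x‖
          = ‖∫ t : ℝ, ‖x‖ ^ n.1 • iteratedFDeriv ℝ n.2 (fun x => S (x, t)) x‖ := by
            rw [integral_smul, norm_smul, norm_pow, norm_norm]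
        _ ≤ ∫ t : ℝ, (1 + t ^ 2)⁻¹ * (2 * q S) := by
            refine norm_integral_le_of_norm_le (integrable_inv_one_add_sq.mul_const _)
              (.of_forall fun t => ?_)
            rw [norm_smul, norm_pow, norm_norm]
            refine (pow_mul_norm_iteratedFDeriv_slice_le S n.1 n.2 t x).trans ?_
            gcongr
            linarith
        _ = _ := by rw [integral_mul_const, mul_assoc]⟩)

@[simp]
lemma SchwartzMap.integralSnd_apply (S : SchwartzMap (E × ℝ) F) (x : E) :
    SchwartzMap.integralSnd S x = ∫ t : ℝ, S (x, t) := rfl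

end Slices

section Functional

/-- A functional dominated by the norm of a linear map factors continuously through it. -/
lemma exists_strongDual_comp_eq {V B : Type} [AddCommGroup V] [Module ℝ V]
    [NormedAddCommGroup B] [NormedSpace ℝ B] (ι : V →ₗ[ℝ] B) (u : V →ₗ[ℝ] ℝ) (C : ℝ)
    (h : ∀ f, ‖u f‖ ≤ C * ‖ι f‖) : ∃ g : StrongDual ℝ B, ∀ f, g (ι f) = u f := by
  obtain ⟨σ, hσ⟩ := ι.rangeRestrict.exists_rightInverse_of_surjective ι.range_rangeRestrict
  have hισ : ∀ y : ι.range, ι (σ y) = y := fun y =>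
    congrArg Subtype.val (LinearMap.congr_fun hσ y)
  obtain ⟨g, hg, -⟩ := exists_extension_norm_eq ι.range
    ((u.comp σ).mkContinuous C fun y => by simpa [hισ] using h (σ y))
  refine ⟨g, fun f => ?_⟩
  have h1 := hg (ι.rangeRestrict f)
  have h2 := h (σ (ι.rangeRestrict f) - f)
  rw [map_sub ι, hισ, LinearMap.codRestrict_apply, sub_self, norm_zero, mul_zero,
    norm_le_zero_iff, map_sub, sub_eq_zero] at h2
  simpa [h2] using h1

variable {E F : Type} [NormedAddCommGroup E] [NormedSpace ℝ E]
  [NormedAddCommGroup F] [NormedSpace ℝ F]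

open BoundedContinuousFunction

/-- Bounded continuous functions into a normed group, metrized through the norm. -/
abbrev NormedBCF (X G : Type) [TopologicalSpace X] [NormedAddCommGroup G] := X →ᵇ G

/-- The bounded function `x ↦ ‖x‖ ^ k D^l f(x)` attached to a Schwartz function `f`. -/
def SchwartzMap.weightedDeriv (k l : ℕ) : SchwartzMap E F →ₗ[ℝ] NormedBCF E (E [×l]→L[ℝ] F) where
  toFun f := BoundedContinuousFunction.ofNormedAddCommGroup
    (fun x => ‖x‖ ^ k • iteratedFDeriv ℝ l f x)
    ((continuous_norm.pow k).smul ((f.smooth l).continuous_iteratedFDeriv le_rfl))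
    (SchwartzMap.seminorm ℝ k l f) fun x => by
      simpa [norm_smul] using f.le_seminorm ℝ k l x
  map_add' f g := by
    ext1 x
    have h := iteratedFDeriv_add_apply (i := l) (x := x) (f.smooth l).contDiffAt
      (g.smooth l).contDiffAt
    exact (congrArg _ h).trans (smul_add _ _ _)
  map_smul' c f := by
    ext1 x
    have h := iteratedFDeriv_const_smul_apply (i := l) (x := x) (a := c) (f.smooth l).contDiffAt
    exact (congrArg _ h).trans (smul_comm _ _ _)

lemma SchwartzMap.weightedDeriv_apply (k l : ℕ) (f : SchwartzMap E F) (x : E) :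
    weightedDeriv k l f x = ‖x‖ ^ k • iteratedFDeriv ℝ l f x := rfl

lemma SchwartzMap.norm_weightedDeriv (k l : ℕ) (f : SchwartzMap E F) :
    ‖weightedDeriv k l f‖ = SchwartzMap.seminorm ℝ k l f := by
  refine le_antisymm ((BoundedContinuousFunction.norm_le (apply_nonneg _ _)).2 fun x => ?_)
    (SchwartzMap.seminorm_le_bound ℝ k l f (norm_nonneg _) fun x => ?_)
  · simpa [weightedDeriv_apply, norm_smul] using f.le_seminorm ℝ k l x
  · simpa [weightedDeriv_apply, norm_smul] using (weightedDeriv k l f).norm_coe_le_norm x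

lemma SchwartzMap.continuous_weightedDeriv_slice (S : SchwartzMap (E × ℝ) F) (k l : ℕ) :
    Continuous fun t : ℝ => weightedDeriv k l (slice t S) := by
  refine (LipschitzWith.of_dist_le_mul (K := (SchwartzMap.seminorm ℝ k (l + 1) S).toNNReal)
    fun t t' => ?_).continuous
  rw [dist_eq_norm, ← map_sub, norm_weightedDeriv, Real.coe_toNNReal _ (apply_nonneg _ _)]
  exact seminorm_slice_sub_slice_le S k l t t'

lemma SchwartzMap.integrable_weightedDeriv_slice (S : SchwartzMap (E × ℝ) F) (k l : ℕ) :
    Integrable fun t : ℝ => weightedDeriv k l (slice t S) :=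
  (integrable_inv_one_add_sq.mul_const _).mono'
    (continuous_weightedDeriv_slice S k l).aestronglyMeasurable
    (.of_forall fun t => (norm_weightedDeriv k l _).trans_le (seminorm_slice_le S k l t))

lemma SchwartzMap.integral_weightedDeriv_slice [CompleteSpace F] (S : SchwartzMap (E × ℝ) F)
    (k l : ℕ) :
    ∫ t : ℝ, weightedDeriv k l (slice t S) = weightedDeriv k l (integralSnd S) := by
  ext1 x
  have h := (BoundedContinuousFunction.evalCLM ℝ x).integral_comp_comm
    (integrable_weightedDeriv_slice S k l)
  refine h.symm.trans ?_
  have h1 := (smoothDominated_slice S).iteratedFDeriv_integral l x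
  exact (integral_smul (‖x‖ ^ k) _).trans (congrArg _ h1.symm)

/-- A tempered distribution commutes with integration in the parameter `t`. -/
lemma SchwartzMap.integral_apply_slice [CompleteSpace F] (u : SchwartzMap E F →L[ℝ] ℝ)
    (S : SchwartzMap (E × ℝ) F) :
    ∫ t : ℝ, u (slice t S) = u (integralSnd S) := by
  obtain ⟨s, C, -, hC⟩ := Seminorm.bound_of_continuous (schwartz_withSeminorms ℝ E F)
    ((normSeminorm ℝ ℝ).comp u.toLinearMap) (continuous_norm.comp u.continuous)
  let ι : SchwartzMap E F →ₗ[ℝ] (i : s) → NormedBCF E (E [×i.1.2]→L[ℝ] F) :=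
    LinearMap.pi fun i => weightedDeriv i.1.1 i.1.2
  obtain ⟨g, hg⟩ := exists_strongDual_comp_eq ι u.toLinearMap C fun f => by
    refine (hC f).trans (mul_le_mul_of_nonneg_left ?_ C.2)
    refine Seminorm.finset_sup_apply_le (norm_nonneg _) fun i hi => ?_
    exact (norm_weightedDeriv i.1 i.2 f).symm.trans_le (norm_le_pi_norm (ι f) ⟨i, hi⟩)
  have hint : Integrable fun t : ℝ => ι (slice t S) :=
    Integrable.of_eval fun i => integrable_weightedDeriv_slice S i.1.1 i.1.2
  have hι : ∫ t : ℝ, ι (slice t S) = ι (integralSnd S) := by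
    ext1 i
    rw [eval_integral fun i => integrable_weightedDeriv_slice S i.1.1 i.1.2]
    exact integral_weightedDeriv_slice S _ _
  have h := g.integral_comp_comm hint
  rw [hι] at h
  simp only [hg] at h
  exact h

end Functional

section Anisotropic

variable {d : ℕ}

lemma VanishingMoments.integral_prod_mul_eq_zero {θ : (Fin d → ℝ) → ℝ} (hθ : VanishingMoments θ)
    {m : ℕ} (r : Fin m → Fin d) : ∫ z, (∏ i, z (r i)) * θ z = 0 := by
  rw [← hθ fun q => Finset.card {i | r i = q}]
  congr 1 with z
  rw [← Finset.prod_fiberwise' Finset.univ r z]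
  simp

/-- The linear map `z ↦ (2 ^ (-j aᵢ) zᵢ)ᵢ`. -/
def anisoContraction (a : Fin d → ℝ) (j : ℕ) : (Fin d → ℝ) →L[ℝ] (Fin d → ℝ) :=
  ContinuousLinearMap.pi fun i => ((2:ℝ) ^ (-((j:ℝ) * a i))) • ContinuousLinearMap.proj i

lemma anisoContraction_apply (a : Fin d → ℝ) (j : ℕ) (z : Fin d → ℝ) (i : Fin d) :
    anisoContraction a j z i = (2:ℝ) ^ (-((j:ℝ) * a i)) * z i := rfl

lemma norm_inl_comp_anisoContraction_le {a : Fin d → ℝ} (ha : ∀ i, 1 ≤ a i) (j : ℕ) :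
    ‖(ContinuousLinearMap.inl ℝ (Fin d → ℝ) ℝ).comp (anisoContraction a j)‖ ≤
      (2:ℝ) ^ (-(j:ℝ)) := by
  refine ContinuousLinearMap.opNorm_le_bound _ (by positivity) fun z => ?_
  have h : ‖anisoContraction a j z‖ ≤ (2:ℝ) ^ (-(j:ℝ)) * ‖z‖ := by
    refine (pi_norm_le_iff_of_nonneg (by positivity)).2 fun i => ?_
    rw [anisoContraction_apply, norm_mul, Real.norm_of_nonneg (by positivity)]
    have h1 : (j:ℝ) ≤ j * a i := le_mul_of_one_le_right (Nat.cast_nonneg j) (ha i)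
    gcongr
    · norm_num
    · exact norm_le_pi_norm z i
  simpa [Prod.norm_def] using h

lemma anisoDil_eq (a : Fin d → ℝ) (θ₀ θ : SchwartzMap (Fin d → ℝ) ℝ) (j : ℕ) (x : Fin d → ℝ) :
    anisoDil a θ₀ θ j x = (2:ℝ) ^ ((j:ℝ) * ∑ i, a i) *
      (if j = 0 then θ₀ else θ) (fun i => (2:ℝ) ^ ((j:ℝ) * a i) * x i) := by
  rcases eq_or_ne j 0 with rfl | hj
  · simp [anisoDil]
  · simp [anisoDil, hj]

lemma integral_eq_prod_mul_integral_diagonal {b : Fin d → ℝ} (hb : ∀ i, 0 < b i)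
    {f : (Fin d → ℝ) → ℝ} (hf : Continuous f) :
    ∫ z, f z = (∏ i, b i) * ∫ y : Fin d → ℝ, f (fun i => b i * y i) := by
  have hdet : (Matrix.diagonal b).det = ∏ i, b i := Matrix.det_diagonal
  have hpos : 0 < ∏ i, b i := Finset.prod_pos fun i _ => hb i
  have h := Real.smul_map_diagonal_volume_pi (D := b) (by rw [hdet]; exact hpos.ne')
  have hlin : ⇑(Matrix.toLin' (Matrix.diagonal b)) = fun (y : Fin d → ℝ) i => b i * y i := by
    ext y i
    simp [Matrix.mulVec_diagonal]
  conv_lhs => rw [← h]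
  rw [integral_smul_measure, hlin, integral_map (Continuous.aemeasurable (by fun_prop))
    hf.aestronglyMeasurable, hdet, ENNReal.toReal_ofReal (abs_nonneg _), abs_of_pos hpos, smul_eq_mul]

lemma integral_anisoDil_sub_mul (a : Fin d → ℝ) (θ₀ θ : SchwartzMap (Fin d → ℝ) ℝ) (j : ℕ)
    (x : Fin d → ℝ) {g : (Fin d → ℝ) → ℝ} (hg : Continuous g) :
    ∫ y, anisoDil a θ₀ θ j (y - x) * g y =
      ∫ z, (if j = 0 then θ₀ else θ) z • g (x + anisoContraction a j z) := by
  rw [← integral_add_right_eq_self _ x, integral_eq_prod_mul_integral_diagonal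
    (f := fun z => (if j = 0 then θ₀ else θ) z • g (x + anisoContraction a j z))
    (b := fun i => (2:ℝ) ^ ((j:ℝ) * a i)) (fun i => by positivity) (by fun_prop),
    ← integral_const_mul]
  congr 1 with y
  have h1 : anisoContraction a j (fun i => (2:ℝ) ^ ((j:ℝ) * a i) * y i) = y := by
    ext i
    rw [anisoContraction_apply, ← mul_assoc, ← Real.rpow_add two_pos]
    simp
  rw [h1, anisoDil_eq, Finset.mul_sum, Real.rpow_sum_of_pos two_pos, add_sub_cancel_right,
    add_comm x y, smul_eq_mul, mul_assoc]

lemma two_rpow_neg_pow_mul_le {at_ : ℝ} {M l : ℕ} (hM : at_ * l + 1 ≤ M) (j : ℕ) :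
    ((2:ℝ) ^ (-(j:ℝ))) ^ M * ((2:ℝ) ^ ((j:ℝ) * at_)) ^ l ≤ (1 / 2) ^ j := by
  rw [← Real.rpow_mul_natCast two_pos.le, ← Real.rpow_mul_natCast two_pos.le,
    ← Real.rpow_add two_pos, one_div, ← Real.rpow_natCast, Real.inv_rpow two_pos.le,
    ← Real.rpow_neg two_pos.le]
  refine Real.rpow_le_rpow_of_exponent_le one_le_two ?_
  nlinarith [(Nat.cast_nonneg j : (0:ℝ) ≤ j)]

end Anisotropic

section Operator

variable {d : ℕ} (a : Fin d → ℝ) (ha : ∀ i, 1 ≤ a i) (at_ : ℝ) (hat : 1 ≤ at_)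
  (k₀ k : SchwartzMap (Fin d → ℝ) ℝ) (η : SchwartzMap ℝ ℝ)

/-- The operator `ψ ↦ ((x, t) ↦ (ǩ_j * ψ(·, t))(x) η(2 ^ (j a_t) t))`. -/
def anisoTerm (j : ℕ) :
    SchwartzMap ((Fin d → ℝ) × ℝ) ℝ →L[ℝ] SchwartzMap ((Fin d → ℝ) × ℝ) ℝ :=
  cutoffAverage (if j = 0 then k₀ else k) η
    ((ContinuousLinearMap.inl ℝ (Fin d → ℝ) ℝ).comp (anisoContraction a j))
    ((norm_inl_comp_anisoContraction_le ha j).trans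
      (Real.rpow_le_one_of_one_le_of_nonpos one_le_two (by simp)))
    ((2:ℝ) ^ ((j:ℝ) * at_)) (Real.one_le_rpow one_le_two (by positivity))

lemma anisoTerm_apply (j : ℕ) (ψ : SchwartzMap ((Fin d → ℝ) × ℝ) ℝ) (p : (Fin d → ℝ) × ℝ) :
    anisoTerm a ha at_ hat k₀ k η j ψ p =
      (∫ y : Fin d → ℝ, anisoDil a ⇑k₀ ⇑k j (y - p.1) * ψ (y, p.2)) *
        η ((2:ℝ) ^ ((j:ℝ) * at_) * p.2) := by
  rw [integral_anisoDil_sub_mul a k₀ k j p.1 (g := fun y => ψ (y, p.2)) (by fun_prop)]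
  change (∫ z, (if j = 0 then k₀ else k) z • ψ (p + (anisoContraction a j z, 0))) * _ = _
  congr! 5
  ext <;> simp

lemma exists_hasSum_anisoTerm (hkm : VanishingMoments ⇑k) :
    ∃ S : SchwartzMap ((Fin d → ℝ) × ℝ) ℝ →L[ℝ] SchwartzMap ((Fin d → ℝ) × ℝ) ℝ,
      ∀ ψ, HasSum (fun j => anisoTerm a ha at_ hat k₀ k η j ψ) (S ψ) := by
  refine exists_hasSum_schwartz _ fun q l => ?_
  obtain ⟨M, hM⟩ := exists_nat_ge (at_ * l + 1)
  obtain ⟨C₀, hC₀, h₀⟩ := exists_bound_iteratedFDeriv_average_mul (E := Fin d → ℝ) k₀ η 0 q l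
    (by simp)
  obtain ⟨C, hC, h⟩ := exists_bound_iteratedFDeriv_average_mul (E := Fin d → ℝ) k η M q l
    fun m _ r => hkm.integral_prod_mul_eq_zero r
  refine ⟨Finset.Iic (q, M + l), fun j => (C₀ + C) * (1 / 2) ^ j,
    summable_geometric_two.mul_left _, fun j => by positivity, fun j ψ => ?_⟩
  refine SchwartzMap.seminorm_le_bound ℝ q l _
    (mul_nonneg (by positivity) (apply_nonneg _ _)) fun p => ?_
  have hL := norm_inl_comp_anisoContraction_le ha j
  have hL1 := hL.trans (Real.rpow_le_one_of_one_le_of_nonpos one_le_two (by simp))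
  have hc : 1 ≤ (2:ℝ) ^ ((j:ℝ) * at_) := Real.one_le_rpow one_le_two (by positivity)
  rcases eq_or_ne j 0 with rfl | hj
  · refine (h₀ _ hL1 _ hc ψ p).trans ?_
    refine mul_le_mul ?_ (Finset.sup_mono (f := schwartzSeminormFamily ℝ ((Fin d → ℝ) × ℝ) ℝ)
      (Finset.Iic_subset_Iic.2 (Prod.mk_le_mk.2 ⟨le_rfl, by omega⟩)) ψ) (apply_nonneg _ _)
      (by positivity)
    simpa using hC
  · have hA : ⇑(anisoTerm a ha at_ hat k₀ k η j ψ) = fun p : (Fin d → ℝ) × ℝ =>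
        (∫ z, k z • ψ (p + (ContinuousLinearMap.inl ℝ (Fin d → ℝ) ℝ).comp
          (anisoContraction a j) z)) * η ((2:ℝ) ^ ((j:ℝ) * at_) * p.2) := by
      ext p
      change (∫ z, (if j = 0 then k₀ else k) z • ψ (p + _)) * _ = _
      simp only [if_neg hj]
    rw [hA]
    refine (h _ hL1 _ hc ψ p).trans (mul_le_mul_of_nonneg_right ?_ (apply_nonneg _ _))
    refine mul_le_mul (by linarith) (le_trans ?_ (two_rpow_neg_pow_mul_le hM j)) (by positivity)
      (by positivity)
    gcongr

end Operator

/-- With kernels `k₀, k` and `η` as before: (i) for every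
`ψ ∈ 𝓢(ℝⁿ×ℝ)` the series `Σ_j (x,t) ↦ (ǩ_j * ψ(·,t))(x)·η(2^{j a_t}t)` converges in
`𝓢(ℝⁿ×ℝ)` and `Tψ(x) = ∫_ℝ Σ_j (ǩ_j * ψ(·,t))(x)·η(2^{j a_t}t) dt` defines a continuous
linear map `T : 𝓢(ℝⁿ×ℝ) → 𝓢(ℝⁿ)`; (ii) `⟨Λ_{Qu}, ψ⟩ = ⟨u, Tψ⟩`, so `u ↦ Λ_{Qu}` is
weak*-continuous from `𝓢'(ℝⁿ)` to `𝓢'(ℝⁿ×ℝ)`. -/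
theorem Q_operator_transpose (n : ℕ) (a : Fin (n+1) → ℝ) (ha : ∀ i, 1 ≤ a i)
    (at_ : ℝ) (hat : 1 ≤ at_)
    (k₀ k : SchwartzMap (Fin (n+1) → ℝ) ℝ)
    (hk₀s : tsupport ⇑k₀ ⊆ {x : Fin (n+1) → ℝ | 0 ≤ x (Fin.last n)})
    (hks : tsupport ⇑k ⊆ {x : Fin (n+1) → ℝ | 0 ≤ x (Fin.last n)})
    (hkm : VanishingMoments ⇑k)
    (hrep : ∀ (v : SchwartzMap (Fin (n+1) → ℝ) ℝ →L[ℝ] ℝ)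
        (θ : SchwartzMap (Fin (n+1) → ℝ) ℝ)
        (c : ℕ → SchwartzMap (Fin (n+1) → ℝ) ℝ),
        (∀ (j : ℕ) (x : Fin (n+1) → ℝ),
          c j x = ∫ y : Fin (n+1) → ℝ, anisoDil a ⇑k₀ ⇑k j (y - x) * θ y) →
        Tendsto (fun N => ∑ j ∈ Finset.range N, v (c j)) atTop (nhds (v θ)))
    (η : SchwartzMap ℝ ℝ) (hη : η 0 = 1) :
    ∃ T : SchwartzMap ((Fin (n+1) → ℝ) × ℝ) ℝ →L[ℝ] SchwartzMap (Fin (n+1) → ℝ) ℝ,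
      -- (i-a) the series converges in `𝓢(ℝⁿ×ℝ)`
      (∀ (ψ : SchwartzMap ((Fin (n+1) → ℝ) × ℝ) ℝ)
         (F : ℕ → SchwartzMap ((Fin (n+1) → ℝ) × ℝ) ℝ),
        (∀ (j : ℕ) (p : (Fin (n+1) → ℝ) × ℝ),
          F j p = (∫ y : Fin (n+1) → ℝ, anisoDil a ⇑k₀ ⇑k j (y - p.1) * ψ (y, p.2))
            * η ((2:ℝ) ^ ((j:ℝ) * at_) * p.2)) →
        ∃ S : SchwartzMap ((Fin (n+1) → ℝ) × ℝ) ℝ,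
          Tendsto (fun N => ∑ j ∈ Finset.range N, F j) atTop (nhds S)) ∧
      -- (i-b) `Tψ(x) = ∫_ℝ Σ_j (ǩ_j * ψ(·,t))(x)·η(2^{j a_t}t) dt`
      (∀ (ψ : SchwartzMap ((Fin (n+1) → ℝ) × ℝ) ℝ) (x : Fin (n+1) → ℝ),
        T ψ x = ∫ t : ℝ, ∑' j : ℕ,
          (∫ y : Fin (n+1) → ℝ, anisoDil a ⇑k₀ ⇑k j (y - x) * ψ (y, t))
            * η ((2:ℝ) ^ ((j:ℝ) * at_) * t)) ∧
      -- (ii) `⟨Λ_{Qu}, ψ⟩ = ∫_ℝ ⟨Qu(·,t), ψ(·,t)⟩ dt = ⟨u, Tψ⟩`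
      (∀ (u : SchwartzMap (Fin (n+1) → ℝ) ℝ →L[ℝ] ℝ)
         (ψ : SchwartzMap ((Fin (n+1) → ℝ) × ℝ) ℝ)
         (d : ℕ → ℝ → SchwartzMap (Fin (n+1) → ℝ) ℝ),
        -- `d j t` is the Schwartz function `ǩ_j * ψ(·,t)`
        (∀ (j : ℕ) (t : ℝ) (x : Fin (n+1) → ℝ),
          d j t x = ∫ y : Fin (n+1) → ℝ, anisoDil a ⇑k₀ ⇑k j (y - x) * ψ (y, t)) →
        (∫ t : ℝ, ∑' j : ℕ, η ((2:ℝ) ^ ((j:ℝ) * at_) * t) * u (d j t)) = u (T ψ)) ∧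
      -- weak*-continuity of `u ↦ Λ_{Qu} = u ∘ T`
      (∀ ψ : SchwartzMap ((Fin (n+1) → ℝ) × ℝ) ℝ,
        Continuous fun u : WeakDual ℝ (SchwartzMap (Fin (n+1) → ℝ) ℝ) => u (T ψ)) := by
  obtain ⟨S, hS⟩ := exists_hasSum_anisoTerm a ha at_ hat k₀ k η hkm
  refine ⟨SchwartzMap.integralSnd.comp S, fun ψ F hF => ⟨S ψ, ?_⟩, fun ψ x => ?_,
    fun u ψ d hd => ?_, fun ψ => WeakDual.eval_continuous _⟩
  · have h : F = fun j => anisoTerm a ha at_ hat k₀ k η j ψ := by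
      ext j p
      rw [hF, anisoTerm_apply]
    rw [h]
    exact (hS ψ).tendsto_sum_nat
  · rw [ContinuousLinearMap.comp_apply, SchwartzMap.integralSnd_apply]
    congr 1 with t
    have h := ((BoundedContinuousFunction.evalCLM ℝ (x, t)).comp
      (SchwartzMap.toBoundedContinuousFunctionCLM ℝ ((Fin (n+1) → ℝ) × ℝ) ℝ)).hasSum (hS ψ)
    simp only [ContinuousLinearMap.comp_apply, BoundedContinuousFunction.evalCLM_apply,
      SchwartzMap.toBoundedContinuousFunctionCLM_apply, anisoTerm_apply] at h
    exact h.tsum_eq.symm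
  · rw [ContinuousLinearMap.comp_apply, ← SchwartzMap.integral_apply_slice]
    congr 1 with t
    have h := (u.comp (SchwartzMap.slice t)).hasSum (hS ψ)
    rw [← ContinuousLinearMap.comp_apply, ← h.tsum_eq]
    congr 1 with j
    have hj : SchwartzMap.slice t (anisoTerm a ha at_ hat k₀ k η j ψ) =
        η ((2:ℝ) ^ ((j:ℝ) * at_) * t) • d j t := by
      ext x
      rw [SchwartzMap.slice_apply, anisoTerm_apply, smul_apply, hd, smul_eq_mul,
        mul_comm]
    rw [ContinuousLinearMap.comp_apply, hj, map_smul, smul_eq_mul]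

end
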